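/- Let r ≥ 2 be an integer and let A be a finite-dimensional F-algebra such that x·v = 0 for every x ∈ A and every element v ∈ A that can be written as a product of r elements y_1, …, y_r of A with some placement of parentheses. Then l(A) ≤ (r − 1)·dim A. -/

import Mathlib

/-!
Framework: length of finite-dimensional not necessarily associative,
not necessarily unital algebras (non-unital convention: `L_0(S) = 0`).
The multiplication of the algebra is passed explicitly as a binary
operation `μ`, so that the same definitions apply to an algebra, to its
commutator algebra, to a Lie bracket, etc.
-/

open Submodule Module

/-- `IsWord μ S k w`: `w` is a product of `k` elements of `S` (with respect to the
multiplication `μ`) with some placement of parentheses. -/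
inductive IsWord {A : Type*} (μ : A → A → A) (S : Set A) : ℕ → A → Prop
  | base {a : A} (ha : a ∈ S) : IsWord μ S 1 a
  | mul {m n : ℕ} {a b : A} (ha : IsWord μ S m a) (hb : IsWord μ S n b) :
      IsWord μ S (m + n) (μ a b)

/-- The multiplication of an algebra, as a plain binary operation. -/
def amul (A : Type*) [Mul A] : A → A → A := fun a b => a * b

section
variable (F : Type*) {A : Type*} [Field F] [AddCommGroup A] [Module F A]

/-- `L_i(S)`: the linear span of all words in `S` of length at most `i`
(non-unital convention, so `L_0(S) = 0`). -/
def Lset (μ : A → A → A) (S : Set A) (i : ℕ) : Submodule F A :=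
  Submodule.span F {a | ∃ k, k ≤ i ∧ IsWord μ S k a}

/-- `S` generates the algebra, i.e. the span of all words in `S` is everything. -/
def Generates (μ : A → A → A) (S : Set A) : Prop :=
  Submodule.span F {a | ∃ k, IsWord μ S k a} = ⊤

/-- `l(S)`: the length of a generating set `S`, the least `k` with `L_k(S) = A`. -/
noncomputable def lenSet (μ : A → A → A) (S : Set A) : ℕ :=
  sInf {k | Lset F μ S k = ⊤}

/-- An irreducible word of length `k` in `S`. -/
def IrredWord (μ : A → A → A) (S : Set A) (k : ℕ) (w : A) : Prop :=
  IsWord μ S k w ∧ ∀ m, m < k → w ∉ Lset F μ S m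

end

section
variable {A : Type*}

/-- The set `P(x,y,z)` of monomials. -/
def Pset (μ : A → A → A) (x y z : A) : Set A :=
  {μ (μ x z) y, μ (μ z x) y, μ (μ y z) x, μ (μ z y) x,
   μ x (μ z y), μ x (μ y z), μ y (μ x z), μ y (μ z x),
   μ x y, μ y x, μ x z, μ z x, μ y z, μ z y, x, y, z}

/-- The set `Q_l(x,y,z)` of monomials. -/
def Qlset (μ : A → A → A) (x y z : A) : Set A :=
  {μ x (μ z y), μ x (μ y z), μ y (μ x z), μ y (μ z x),
   μ x y, μ y x, μ x z, μ z x, μ y z, μ z y, x, y, z}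

/-- The set `Q_r(x,y,z)` of monomials. -/
def Qrset (μ : A → A → A) (x y z : A) : Set A :=
  {μ (μ x z) y, μ (μ z x) y, μ (μ y z) x, μ (μ z y) x,
   μ x y, μ y x, μ x z, μ z x, μ y z, μ z y, x, y, z}

end

section
variable (F : Type*) {A : Type*} [Field F] [AddCommGroup A] [Module F A]

/-- A mixing algebra: `(xy)z` and `z(xy)` lie in the span of `P(x,y,z)`. -/
def IsMixing (μ : A → A → A) : Prop :=
  ∀ x y z : A, μ (μ x y) z ∈ Submodule.span F (Pset μ x y z) ∧
    μ z (μ x y) ∈ Submodule.span F (Pset μ x y z)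

/-- A sliding algebra: either `z(xy)` always lies in the span of `Q_r(x,y,z)`, or
`(xy)z` always lies in the span of `Q_l(x,y,z)`. -/
def IsSliding (μ : A → A → A) : Prop :=
  (∀ x y z : A, μ z (μ x y) ∈ Submodule.span F (Qrset μ x y z)) ∨
  (∀ x y z : A, μ (μ x y) z ∈ Submodule.span F (Qlset μ x y z))

end

/-!
Put `p = r - 1`. If a word `a * b` is nonzero, then `b` has length at most `p`: contracting
subwords turns a longer word into a product of exactly `r` elements of the algebra. So if
`L_n(S) = L_{n + p}(S)`, then by induction every word lies in `L_n(S)`, because `a ∈ L_n(S)`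
gives `a * b ∈ L_{n + p}(S)`. The dimension of `L_{p t}(S)` therefore grows strictly with `t`
until `A` is reached, which takes at most `dim A` steps.
-/

theorem exists_le_finrank_not_lt_succ {K V : Type*} [DivisionRing K] [AddCommGroup V] [Module K V]
    [FiniteDimensional K V] (W : ℕ → Submodule K V) :
    ∃ t ≤ finrank K V, ¬ W t < W (t + 1) := by
  by_contra! h
  have hmono : StrictMonoOn (fun t ↦ finrank K (W t)) (Set.Iic (finrank K V + 1)) :=
    strictMonoOn_Iic_of_lt_succ fun t ht ↦ finrank_lt_finrank_of_lt (h t (Nat.lt_succ_iff.mp ht))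
  have hle : finrank K V + 1 ≤ finrank K (W (finrank K V + 1)) := hmono.Iic_id_le _ le_rfl
  exact (finrank_le (W (finrank K V + 1))).not_gt hle

namespace IsWord

variable {A : Type*} {μ : A → A → A} {S : Set A} {k : ℕ} {w : A}

theorem length_pos (h : IsWord μ S k w) : 0 < k := by
  induction h with
  | base _ => exact Nat.one_pos
  | mul _ _ ih _ => exact Nat.add_pos_left ih _

theorem univ_of_le (h : IsWord μ S k w) {r : ℕ} (hr : 0 < r) (hrk : r ≤ k) :
    IsWord μ Set.univ r w := by
  induction h generalizing r with
  | base _ =>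
    obtain rfl : r = 1 := by omega
    exact .base (Set.mem_univ _)
  | @mul m n _ _ ha hb iha ihb =>
    have hm := ha.length_pos
    have hn := hb.length_pos
    obtain rfl | hr₂ : r = 1 ∨ 2 ≤ r := by omega
    · exact .base (Set.mem_univ _)
    · obtain ⟨i, j, rfl, hi, him, hj, hjn⟩ :
          ∃ i j, r = i + j ∧ 0 < i ∧ i ≤ m ∧ 0 < j ∧ j ≤ n :=
        ⟨min m (r - 1), r - min m (r - 1), by omega, by omega, by omega, by omega, by omega⟩
      exact .mul (iha hi him) (ihb hj hjn)

end IsWord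

section

variable {F A : Type*} [Field F] [AddCommGroup A] [Module F A] {μ : A → A → A} {S : Set A}

theorem IsWord.mem_Lset {k i : ℕ} {w : A} (h : IsWord μ S k w) (hki : k ≤ i) :
    w ∈ Lset F μ S i :=
  subset_span ⟨k, hki, h⟩

variable (F μ S) in
theorem Lset_mono : Monotone (Lset F μ S) :=
  fun _ _ hij ↦ span_mono fun _ ⟨k, hk, h⟩ ↦ ⟨k, hk.trans hij, h⟩

theorem mul_word_mem_Lset {i j : ℕ} {a b : A} (hμ : IsLinearMap F (μ · b))
    (ha : a ∈ Lset F μ S i) (hb : IsWord μ S j b) : μ a b ∈ Lset F μ S (i + j) := by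
  have hle : Lset F μ S i ≤ (Lset F μ S (i + j)).comap (hμ.mk' _) :=
    span_le.mpr fun _ ⟨_, hk, hx⟩ ↦ (hx.mul hb).mem_Lset (Nat.add_le_add_right hk j)
  exact hle ha

theorem IsWord.mem_Lset_of_stationary {p n m : ℕ} {w : A} (hμ : ∀ b, IsLinearMap F (μ · b))
    (hp : 0 < p) (hzero : ∀ k v, p < k → IsWord μ S k v → ∀ x, μ x v = 0)
    (hn : Lset F μ S (n + p) ≤ Lset F μ S n) (hw : IsWord μ S m w) : w ∈ Lset F μ S n := by
  induction hw with
  | base ha => exact hn ((IsWord.base ha).mem_Lset (by omega))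
  | @mul _ q a b _ hb iha _ =>
    obtain hq | hq := lt_or_ge p q
    · rw [hzero q b hq hb a]
      exact zero_mem _
    · exact hn (Lset_mono F μ S (Nat.add_le_add_left hq n) (mul_word_mem_Lset (hμ b) iha hb))

theorem Generates.Lset_eq_top_of_stationary {p n : ℕ} (hS : Generates F μ S)
    (hμ : ∀ b, IsLinearMap F (μ · b)) (hp : 0 < p)
    (hzero : ∀ k v, p < k → IsWord μ S k v → ∀ x, μ x v = 0)
    (hn : Lset F μ S (n + p) ≤ Lset F μ S n) : Lset F μ S n = ⊤ :=
  top_le_iff.mp <| hS.ge.trans <|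
    span_le.mpr fun _ ⟨_, hw⟩ ↦ hw.mem_Lset_of_stationary hμ hp hzero hn

theorem lenSet_le_of_Lset_eq_top {n k : ℕ} (hn : Lset F μ S n = ⊤) (hnk : n ≤ k) :
    lenSet F μ S ≤ k :=
  (Nat.sInf_le hn).trans hnk

theorem length_le_of_right_annihilating_products_general [FiniteDimensional F A] {p : ℕ}
    (hS : Generates F μ S) (hμ : ∀ b, IsLinearMap F (μ · b)) (hp : 0 < p)
    (hzero : ∀ k v, p < k → IsWord μ S k v → ∀ x, μ x v = 0) :
    lenSet F μ S ≤ p * finrank F A := by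
  obtain ⟨t, ht, hnot_lt⟩ := exists_le_finrank_not_lt_succ fun t ↦ Lset F μ S (p * t)
  have hmono : Lset F μ S (p * t) ≤ Lset F μ S (p * t + p) := Lset_mono F μ S (by omega)
  have hstat : Lset F μ S (p * t + p) ≤ Lset F μ S (p * t) :=
    (hmono.eq_of_not_lt hnot_lt).ge
  exact lenSet_le_of_Lset_eq_top (hS.Lset_eq_top_of_stationary hμ hp hzero hstat)
    (Nat.mul_le_mul_left p ht)

end

/-- if `r ≥ 2` and `x·v = 0` for every `x` and every `v` that is a product
of `r` elements of the algebra (with some placement of parentheses, i.e. a word of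
length `r` in the generating set consisting of all elements), then
`l(A) ≤ (r − 1)·dim A`. -/
theorem length_le_of_right_annihilating_products
    {F B : Type*} [Field F] [NonUnitalNonAssocRing B] [Module F B]
    [SMulCommClass F B B] [IsScalarTower F B B] [FiniteDimensional F B]
    (r : ℕ) (hr : 2 ≤ r)
    (hzero : ∀ x v : B, IsWord (amul B) (Set.univ : Set B) r v → x * v = 0) :
    ∀ S : Set B, S.Finite → Generates F (amul B) S →
      lenSet F (amul B) S ≤ (r - 1) * finrank F B :=
  fun _ _ hS ↦ length_le_of_right_annihilating_products_general hS
    (fun b ↦ (LinearMap.mulRight F b).isLinear) (by omega)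
    fun _ v hk hv x ↦ hzero x v (hv.univ_of_le (by omega) (by omega))
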